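/- arXiv:2502.00959 — 2 statements merged into one kernel-verified Lean document; each statement's English description precedes it below -/
import Mathlib

section
/- Let p : U(2) → PU(2) be the quotient by the center Z. If K is a closed subgroup of U(2) with p(K) = PU(2) and K ≠ U(2), then the identity component of K is conjugate to SU(2), and K = SU(2) ·_Z C, i.e. K is generated by a conjugate of SU(2) together with a finite cyclic central subgroup C_{2s} ⊆ Z of even order. -/
/-!
The subgroup `K` meets every coset of the center `Z`, and commutators do not change when their
entries are multiplied by central elements. So `K` contains every commutator of `U(2)`, and every
element of `SU(2)` is one (`SU_comm`, by diagonalization); hence `SU(2) ≤ K` (`SU_le`), and the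
conjugating element can be taken to be `1`.

Thus `K` is the preimage under `det` of a subgroup of the circle. That subgroup is closed and
proper, so it is the group of `s`-th roots of unity for some `s ≥ 1` (`exists_det_pow`, from the
classification of closed subgroups of `ℝ`).

A central element `c` has determinant `c ^ 2`, so it lies in `K` exactly when `c ^ (2 s) = 1`.
Dividing an element of `K` by a central square root of its determinant gives
`K = SU(2) ⊔ C_{2s}`. Finally `det` is constant on the identity component of `K`, its values being
in a finite set, while `SU(2)` is connected, so this component is `SU(2)`.
-/

open Matrix

abbrev U2 : Type := Matrix.unitaryGroup (Fin 2) ℂ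

/-- The diagonal maximal torus `T ≤ U(2)`. -/
def Tsub : Subgroup U2 where
  carrier := {g | ∀ i j : Fin 2, i ≠ j → (g : Matrix (Fin 2) (Fin 2) ℂ) i j = 0}
  one_mem' := by
    intro i j hij
    simp [Matrix.one_apply, hij]
  mul_mem' := by
    intro a b ha hb i j hij
    show (a.1 * b.1) i j = 0
    rw [Matrix.mul_apply]
    apply Finset.sum_eq_zero
    intro k _
    by_cases hk : k = i
    · subst hk
      rw [hb k j hij, mul_zero]
    · rw [ha i k (fun h => hk h.symm), zero_mul]
  inv_mem' := by
    intro a ha i j hij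
    show (star a.1) i j = 0
    rw [Matrix.star_apply]
    rw [ha j i (Ne.symm hij)]
    simp

/-- The determinant-one subgroup `SU(2) ≤ U(2)`. -/
def SUsub : Subgroup U2 where
  carrier := {g | (g : Matrix (Fin 2) (Fin 2) ℂ).det = 1}
  one_mem' := by simp
  mul_mem' := by
    intro a b ha hb
    simp only [Set.mem_setOf_eq] at *
    rw [Matrix.UnitaryGroup.mul_val, Matrix.det_mul, ha, hb, one_mul]
  inv_mem' := by
    intro a ha
    simp only [Set.mem_setOf_eq] at *
    rw [Matrix.UnitaryGroup.inv_val]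
    rw [Matrix.star_eq_conjTranspose, Matrix.det_conjTranspose, ha]
    simp

/-- The projective unitary group `PU(2) = U(2)/Z`. -/
abbrev PU2 : Type := U2 ⧸ Subgroup.center U2

/-- The quotient map `p : U(2) → PU(2)`. -/
def pQ : U2 →* PU2 := QuotientGroup.mk' (Subgroup.center U2)

/-- The cyclic subgroup `C_n ⊆ Z` of central elements of `U(2)` of order dividing `n`. -/
def centralCyclic (n : ℕ) : Subgroup U2 where
  carrier := {g | g ∈ Subgroup.center U2 ∧ g ^ n = 1}
  one_mem' := ⟨Subgroup.one_mem _, one_pow n⟩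
  mul_mem' := by
    rintro a b ⟨ha, ha'⟩ ⟨hb, hb'⟩
    refine ⟨Subgroup.mul_mem _ ha hb, ?_⟩
    rw [Commute.mul_pow, ha', hb', one_mul]
    exact (Subgroup.mem_center_iff.mp ha b).symm
  inv_mem' := by
    rintro a ⟨ha, ha'⟩
    exact ⟨Subgroup.inv_mem _ ha, by rw [inv_pow, ha', inv_one]⟩

/-! ### Diagonal matrices, the swap and determinants -/

/-- The diagonal unitary matrix with diagonal entries `exp (i a)` and `exp (i b)`. -/
noncomputable def dg (a b : ℝ) : U2 :=
  ⟨Matrix.diagonal ![Complex.exp (a * Complex.I), Complex.exp (b * Complex.I)], by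
    rw [Matrix.mem_unitaryGroup_iff]
    ext i j
    fin_cases i <;> fin_cases j <;>
      simp [Matrix.star_eq_conjTranspose, Matrix.mul_apply, Matrix.diagonal,
        Complex.mul_conj, Complex.normSq_eq_norm_sq, Complex.norm_exp_ofReal_mul_I]⟩

/-- The permutation matrix exchanging the two coordinates, as a unitary matrix. -/
noncomputable def swapU : U2 :=
  ⟨!![0, 1; 1, 0], by
    rw [Matrix.mem_unitaryGroup_iff]
    ext i j
    fin_cases i <;> fin_cases j <;>
      simp [Matrix.star_eq_conjTranspose, Matrix.mul_apply, Fin.sum_univ_two]⟩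

lemma dg_val (a b : ℝ) : (dg a b : Matrix (Fin 2) (Fin 2) ℂ) =
    Matrix.diagonal ![Complex.exp (a * Complex.I), Complex.exp (b * Complex.I)] := rfl

lemma dg_mul (a b c d : ℝ) : dg a b * dg c d = dg (a + c) (b + d) := by
  apply Subtype.ext
  rw [Matrix.UnitaryGroup.mul_val]
  simp only [dg_val, Matrix.diagonal_mul_diagonal]
  congr 1
  ext i
  fin_cases i <;> simp [← Complex.exp_add, add_mul]

lemma dg_zero : dg 0 0 = 1 := by
  apply Subtype.ext
  rw [dg_val]
  ext i j
  fin_cases i <;> fin_cases j <;> simp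

lemma dg_inv (a b : ℝ) : (dg a b)⁻¹ = dg (-a) (-b) := by
  rw [inv_eq_iff_mul_eq_one, dg_mul]
  simp [dg_zero]

lemma det_dg (a b : ℝ) : (dg a b : Matrix (Fin 2) (Fin 2) ℂ).det =
    Complex.exp (a * Complex.I) * Complex.exp (b * Complex.I) := by
  simp [dg_val, Matrix.det_diagonal, Fin.prod_univ_two]

lemma swap_conj (a b : ℝ) : swapU * dg a b * swapU⁻¹ = dg b a := by
  rw [mul_inv_eq_iff_eq_mul]
  apply Subtype.ext
  simp only [Matrix.UnitaryGroup.mul_val, dg_val, swapU]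
  ext i j
  fin_cases i <;> fin_cases j <;> simp [Matrix.mul_apply, Fin.sum_univ_two]

lemma continuous_dg : Continuous fun x : ℝ × ℝ => dg x.1 x.2 := by
  apply Continuous.subtype_mk
  apply Continuous.matrix_diagonal
  apply continuous_pi
  intro i
  fin_cases i <;> simp <;> fun_prop

lemma norm_det_U2 (u : U2) : ‖(u : Matrix (Fin 2) (Fin 2) ℂ).det‖ = 1 :=
  CStarRing.norm_of_mem_unitary (Matrix.det_of_mem_unitary u.2)

lemma exists_det (u : U2) :
    ∃ t : ℝ, (u : Matrix (Fin 2) (Fin 2) ℂ).det = Complex.exp (t * Complex.I) := by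
  obtain ⟨t, ht⟩ := (Complex.norm_eq_one_iff _).1 (norm_det_U2 u)
  exact ⟨t, ht.symm⟩

lemma det_mul_U2 (a b : U2) : ((a * b : U2) : Matrix (Fin 2) (Fin 2) ℂ).det =
    (a : Matrix (Fin 2) (Fin 2) ℂ).det * (b : Matrix (Fin 2) (Fin 2) ℂ).det := by
  rw [Matrix.UnitaryGroup.mul_val, Matrix.det_mul]

/-! ### Elements of `SU(2)` are commutators -/

/-- For `g ∈ SU(2)`, Cayley–Hamilton gives `g + g* = tr g`, so `g` is a polynomial in the Hermitian
matrix `(g - g*) / 2i`, whose spectral decomposition therefore diagonalizes `g`. -/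
lemma SU_diag (g : U2) (hg : g ∈ SUsub) : ∃ (U : U2) (t : ℝ), g = U * dg t (-t) * U⁻¹ := by
  have hdet : (g : Matrix (Fin 2) (Fin 2) ℂ).det = 1 := hg
  have hadj : star (g : Matrix (Fin 2) (Fin 2) ℂ) = (g : Matrix (Fin 2) (Fin 2) ℂ).adjugate := by
    have h1 : star (g : Matrix (Fin 2) (Fin 2) ℂ) * g = 1 := Matrix.mem_unitaryGroup_iff'.1 g.2
    have h2 := Matrix.mul_adjugate (g : Matrix (Fin 2) (Fin 2) ℂ)
    rw [hdet, one_smul] at h2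
    exact left_inv_eq_right_inv h1 h2
  set A : Matrix (Fin 2) (Fin 2) ℂ := (Complex.I / 2) • (star g.1 - g.1) with hA
  have hH : A.IsHermitian := by
    unfold Matrix.IsHermitian
    rw [hA, Matrix.star_eq_conjTranspose, Matrix.conjTranspose_smul, Matrix.conjTranspose_sub,
      Matrix.conjTranspose_conjTranspose]
    ext i j
    simp
    ring
  have hgA : g.1 = (g.1.trace / 2) • (1 : Matrix (Fin 2) (Fin 2) ℂ) + Complex.I • A := by
    have hI : Complex.I * (Complex.I / 2) = -1 / 2 := by
      rw [← mul_div_assoc, Complex.I_mul_I]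
    rw [hA, smul_smul, hI, hadj, Matrix.adjugate_fin_two]
    ext i j
    fin_cases i <;> fin_cases j <;> simp [Matrix.trace_fin_two] <;> ring
  set U : U2 := hH.eigenvectorUnitary with hU
  have hsp := hH.spectral_theorem
  rw [Unitary.conjStarAlgAut_apply] at hsp
  have hUU : star U.1 * U.1 = 1 := Matrix.mem_unitaryGroup_iff'.1 U.2
  set d : U2 := U⁻¹ * g * U with hd
  have hdv : d.1 = (g.1.trace / 2) • (1 : Matrix (Fin 2) (Fin 2) ℂ) +
      Complex.I • Matrix.diagonal (RCLike.ofReal ∘ hH.eigenvalues) := by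
    have hUAU : star U.1 * A * U.1 = Matrix.diagonal (RCLike.ofReal ∘ hH.eigenvalues) := by
      conv_lhs => rw [hsp]
      change star U.1 * (U.1 * _ * star U.1) * U.1 = _
      rw [show ∀ D : Matrix (Fin 2) (Fin 2) ℂ, star U.1 * (U.1 * D * star U.1) * U.1 =
        (star U.1 * U.1) * D * (star U.1 * U.1) from fun D => by noncomm_ring, hUU]
      simp
    have : d.1 = star U.1 * g.1 * U.1 := rfl
    rw [this, ← hUAU]
    conv_lhs => rw [hgA]
    simp only [mul_add, add_mul, Matrix.mul_smul, Matrix.smul_mul, Matrix.mul_one, hUU]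
  have h01 : d.1 0 1 = 0 := by rw [hdv]; simp
  have h10 : d.1 1 0 = 0 := by rw [hdv]; simp
  have hdd : d.1.det = 1 := by
    have : g = U * d * U⁻¹ := by rw [hd]; group
    have hs : d ∈ SUsub := by
      change (d : Matrix (Fin 2) (Fin 2) ℂ).det = 1
      have h3 := det_mul_U2 U⁻¹ U
      rw [inv_mul_cancel] at h3
      rw [hd, det_mul_U2, det_mul_U2, hdet, mul_one, ← h3]
      simp
    exact hs
  have h00 : ‖d.1 0 0‖ = 1 := by
    have h4 := congrFun (congrFun (Matrix.mem_unitaryGroup_iff.1 d.2) 0) 0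
    rw [Matrix.mul_apply, Fin.sum_univ_two, h01] at h4
    simp only [Matrix.star_apply, h01, zero_mul, add_zero, Matrix.one_apply_eq] at h4
    have h5 := congrArg norm h4
    rw [norm_mul, norm_star, norm_one] at h5
    nlinarith [norm_nonneg (d.1 0 0)]
  obtain ⟨t, ht⟩ := (Complex.norm_eq_one_iff _).1 h00
  have h11 : d.1 1 1 = Complex.exp (-(t * Complex.I)) := by
    rw [Matrix.det_fin_two, h01, zero_mul, sub_zero, ← ht] at hdd
    rw [Complex.exp_neg]
    exact eq_inv_of_mul_eq_one_right hdd
  refine ⟨U, t, ?_⟩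
  have hdt : d = dg t (-t) := by
    apply Subtype.ext
    rw [dg_val]
    ext i j
    fin_cases i <;> fin_cases j <;> simp [h01, h10, h11, ht]
  rw [← hdt, hd]
  group

/-- Diagonalizing, `SU(2)` consists of commutators: `diag (λ, λ⁻¹)` is the commutator of
`diag (μ, μ⁻¹)` and the coordinate swap, where `μ ^ 2 = λ`. -/
lemma SU_comm (g : U2) (hg : g ∈ SUsub) : ∃ a b : U2, g = a * b * a⁻¹ * b⁻¹ := by
  obtain ⟨U, t, rfl⟩ := SU_diag g hg
  refine ⟨U * dg (t / 2) (-(t / 2)) * U⁻¹, U * swapU * U⁻¹, ?_⟩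
  have h : dg t (-t) = dg (t / 2) (-(t / 2)) * (swapU * (dg (t / 2) (-(t / 2)))⁻¹ * swapU⁻¹) := by
    rw [dg_inv, swap_conj, dg_mul]
    congr 1 <;> ring
  rw [h]
  group

/-- A subgroup surjecting onto `PU(2)` has the same commutators as `U(2)`, hence contains `SU(2)`. -/
lemma SU_le (K : Subgroup U2) (hmap : Subgroup.map pQ K = ⊤) : SUsub ≤ K := by
  have key : ∀ u : U2, ∃ k ∈ K, ∃ z ∈ Subgroup.center U2, u = k * z := by
    intro u
    have : pQ u ∈ Subgroup.map pQ K := by rw [hmap]; trivial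
    obtain ⟨k, hk, hku⟩ := this
    exact ⟨k, hk, k⁻¹ * u, QuotientGroup.eq.1 hku, by group⟩
  intro g hg
  obtain ⟨a, b, rfl⟩ := SU_comm g hg
  obtain ⟨k, hk, z, hz, rfl⟩ := key a
  obtain ⟨l, hl, y, hy, rfl⟩ := key b
  have hz' : ∀ x, x * z = z * x := Subgroup.mem_center_iff.1 hz
  have hy' : ∀ x, x * y = y * x := Subgroup.mem_center_iff.1 hy
  have : k * z * (l * y) * (k * z)⁻¹ * (l * y)⁻¹ = k * l * k⁻¹ * l⁻¹ := by
    rw [mul_inv_eq_iff_eq_mul, mul_inv_eq_iff_eq_mul]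
    calc k * z * (l * y) = k * (z * l) * y := by group
      _ = k * l * (z * y) := by rw [← hz']; group
      _ = k * l * (y * z) := by rw [hy' z]
      _ = k * l * k⁻¹ * (k * y) * z := by group
      _ = _ := by rw [hy' k]; group
  rw [this]
  exact K.mul_mem (K.mul_mem (K.mul_mem hk hl) (K.inv_mem hk)) (K.inv_mem hl)

/-! ### Closed subgroups containing `SU(2)` -/

lemma mem_SUsub {u : U2} : u ∈ SUsub ↔ (u : Matrix (Fin 2) (Fin 2) ℂ).det = 1 := Iff.rfl

lemma mem_iff_of_det {K : Subgroup U2} (h : SUsub ≤ K) {u v : U2}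
    (huv : (u : Matrix (Fin 2) (Fin 2) ℂ).det = (v : Matrix (Fin 2) (Fin 2) ℂ).det) :
    u ∈ K ↔ v ∈ K := by
  have h1 : u * v⁻¹ ∈ K := by
    apply h
    rw [mem_SUsub, det_mul_U2, huv, ← det_mul_U2, mul_inv_cancel]
    simp
  constructor
  · intro hu
    have := K.mul_mem (K.inv_mem h1) hu
    simpa using this
  · intro hv
    have := K.mul_mem h1 hv
    simpa using this

/-- A proper closed subgroup containing `SU(2)` is the preimage under `det` of a group of roots of
unity: the angles `t` with `diag (exp (i t), 1) ∈ K` form a proper closed subgroup of `ℝ` containing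
`2π`, which is cyclic. -/
lemma exists_det_pow (K : Subgroup U2) (hK : IsClosed (K : Set U2)) (hSU : SUsub ≤ K)
    (hne : K ≠ ⊤) :
    ∃ s : ℕ, 1 ≤ s ∧ ∀ u : U2, u ∈ K ↔ (u : Matrix (Fin 2) (Fin 2) ℂ).det ^ s = 1 := by
  let G : AddSubgroup ℝ :=
    { carrier := {t | dg t 0 ∈ K}
      zero_mem' := by
        change dg 0 0 ∈ K
        rw [dg_zero]; exact K.one_mem
      add_mem' := by
        intro a b ha hb
        have := K.mul_mem ha hb
        rwa [dg_mul, add_zero] at this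
      neg_mem' := by
        intro a ha
        have := K.inv_mem ha
        rwa [dg_inv, neg_zero] at this }
  have hGm : ∀ t, t ∈ G ↔ dg t 0 ∈ K := fun t => Iff.rfl
  have hGc : IsClosed (G : Set ℝ) :=
    hK.preimage (continuous_dg.comp (Continuous.prodMk_left (0 : ℝ)))
  have hmem : ∀ (u : U2) (t : ℝ),
      (u : Matrix (Fin 2) (Fin 2) ℂ).det = Complex.exp (t * Complex.I) → (u ∈ K ↔ t ∈ G) := by
    intro u t ht
    rw [hGm]
    exact mem_iff_of_det hSU (by rw [ht, det_dg]; simp)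
  rcases G.dense_or_cyclic with hd | ⟨a, ha⟩
  · exfalso
    apply hne
    rw [eq_top_iff]
    intro u _
    obtain ⟨t, ht⟩ := exists_det u
    rw [hmem u t ht]
    have : (G : Set ℝ) = Set.univ := by rw [← hGc.closure_eq, hd.closure_eq]
    exact (Set.ext_iff.1 this t).2 trivial
  · have h2 : (2 * Real.pi) ∈ G := by
      rw [← hmem 1]
      · exact K.one_mem
      · push_cast
        rw [Complex.exp_two_pi_mul_I]; simp
    have hGa : ∀ t, t ∈ G ↔ ∃ n : ℤ, n * a = t := by
      intro t
      rw [ha, AddSubgroup.mem_closure_singleton]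
      simp
    obtain ⟨n, hn⟩ := (hGa _).1 h2
    have hpi := Real.two_pi_pos
    have hn0 : n ≠ 0 := by
      rintro rfl
      simp at hn
    have hn0' : (n : ℝ) ≠ 0 := by exact_mod_cast hn0
    refine ⟨n.natAbs, Int.natAbs_pos.2 hn0, fun u => ?_⟩
    obtain ⟨t, ht⟩ := exists_det u
    rw [hmem u t ht, ht]
    have hz : Complex.exp (t * Complex.I) ^ n.natAbs = 1 ↔
        Complex.exp (t * Complex.I) ^ n = 1 := by
      rcases Int.natAbs_eq n with h | h
      · conv_rhs => rw [h, zpow_natCast]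
      · conv_rhs => rw [h, _root_.zpow_neg, zpow_natCast, inv_eq_one]
    rw [hz, ← Complex.exp_int_mul, Complex.exp_eq_one_iff, hGa]
    have hI := Complex.I_ne_zero
    refine exists_congr fun m => ?_
    have e1 : (n : ℂ) * (t * Complex.I) = m * (2 * Real.pi * Complex.I) ↔
        (n : ℝ) * t = m * (2 * Real.pi) := by
      rw [← @Complex.ofReal_inj (n * t)]
      push_cast
      rw [← mul_assoc, ← mul_assoc (m : ℂ), mul_left_inj' hI]
    rw [e1, ← hn]
    constructor
    · rintro rfl; ring
    · intro h
      apply mul_left_cancel₀ hn0'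
      linarith

/-! ### Central elements -/

lemma center_scalar (z : U2) (hz : z ∈ Subgroup.center U2) :
    (z : Matrix (Fin 2) (Fin 2) ℂ).det = z.1 0 0 ^ 2 ∧ z.1 = Matrix.diagonal fun _ => z.1 0 0 := by
  have hz' : ∀ x, x * z = z * x := Subgroup.mem_center_iff.1 hz
  have h1 := congrArg Subtype.val (hz' (dg 0 Real.pi))
  have h2 := congrArg Subtype.val (hz' swapU)
  rw [Matrix.UnitaryGroup.mul_val, Matrix.UnitaryGroup.mul_val] at h1 h2
  have h01 := congrFun (congrFun h1 0) 1
  have h10 := congrFun (congrFun h1 1) 0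
  have h11 := congrFun (congrFun h2 0) 1
  simp [dg_val, self_eq_neg, neg_eq_self] at h01 h10
  simp [swapU, Matrix.mul_apply, Fin.sum_univ_two] at h11
  constructor
  · rw [Matrix.det_fin_two, h01, h11]; ring
  · ext i j
    fin_cases i <;> fin_cases j <;> simp [h01, h10, h11]

lemma dg_center (t : ℝ) : dg t t ∈ Subgroup.center U2 := by
  rw [Subgroup.mem_center_iff]
  intro x
  apply Subtype.ext
  simp only [Matrix.UnitaryGroup.mul_val, dg_val]
  ext i j
  fin_cases i <;> fin_cases j <;> simp <;> ring

/-! ### The identity component -/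

/-- Each element of `SU(2)` lies on a conjugate of the one-parameter group
`diag (exp (i t), exp (-i t))`, which joins it to `1` inside `K`. -/
lemma SU_subset_component (K : Subgroup U2) (h : SUsub ≤ K) (g : U2) (hg : g ∈ SUsub) :
    g ∈ Subtype.val '' connectedComponent (1 : ↥K) := by
  obtain ⟨U, t, rfl⟩ := SU_diag g hg
  have hmem : ∀ x : ℝ, U * dg x (-x) * U⁻¹ ∈ K := by
    intro x
    apply h
    rw [mem_SUsub, det_mul_U2, det_mul_U2, mul_right_comm, ← det_mul_U2, mul_inv_cancel, det_dg,
      ← Complex.exp_add]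
    simp
  let f : ℝ → K := fun x => ⟨U * dg x (-x) * U⁻¹, hmem x⟩
  have hf : Continuous f := by
    apply Continuous.subtype_mk
    have : Continuous fun x : ℝ => dg x (-x) :=
      continuous_dg.comp (continuous_id.prodMk continuous_neg)
    exact (continuous_const.mul this).mul continuous_const
  have hr : Set.range f ⊆ connectedComponent (1 : ↥K) := by
    apply (isPreconnected_range hf).subset_connectedComponent
    refine ⟨0, Subtype.ext ?_⟩
    change U * dg 0 (-0) * U⁻¹ = 1
    rw [neg_zero, dg_zero]
    group
  exact ⟨f t, hr ⟨t, rfl⟩, rfl⟩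

/-- The determinant is constant on the identity component, as its values on `K` are roots of unity
of bounded order, a finite set. -/
lemma component_subset_SU (K : Subgroup U2) (s : ℕ) (hs : 1 ≤ s)
    (hK : ∀ u : U2, u ∈ K ↔ (u : Matrix (Fin 2) (Fin 2) ℂ).det ^ s = 1) (k : K)
    (hk : k ∈ connectedComponent (1 : ↥K)) : (k : U2) ∈ SUsub := by
  let f : K → ℂ := fun k => (k.1.1).det
  have hf : Continuous f :=
    Continuous.matrix_det (continuous_subtype_val.comp continuous_subtype_val)
  have hfin : {z : ℂ | z ^ s = 1}.Finite := by
    apply (Polynomial.nthRootsFinset s (1 : ℂ)).finite_toSet.subset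
    intro z hz
    simpa [Polynomial.mem_nthRootsFinset (show 0 < s by omega)] using hz
  have hsub : (f '' connectedComponent (1 : ↥K)).Subsingleton := by
    apply hfin.countable.isTotallyDisconnected
    · rintro _ ⟨x, -, rfl⟩
      exact (hK x.1).1 x.2
    · exact isPreconnected_connectedComponent.image _ hf.continuousOn
  have h1 : f k = f 1 := hsub ⟨k, hk, rfl⟩ ⟨1, mem_connectedComponent, rfl⟩
  rw [mem_SUsub]
  change f k = 1
  rw [h1]
  change (1 : Matrix (Fin 2) (Fin 2) ℂ).det = 1
  simp

/-- a proper closed subgroup `K` of `U(2)` mapping onto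
`PU(2) ≅ SO(3)` has identity component conjugate to `SU(2)`, and
`K = gSU(2)g⁻¹ ⊔ C_{2s}` for a central cyclic group `C_{2s}` of even order. -/
theorem closed_subgroup_surjecting_onto_PU2 (K : Subgroup U2)
    (hK : IsClosed (K : Set U2)) (hmap : Subgroup.map pQ K = ⊤) (hne : K ≠ ⊤) :
    ∃ (g : U2) (s : ℕ), 1 ≤ s ∧
      (Subtype.val '' connectedComponent (1 : ↥K)
          = (Subgroup.map (MulAut.conj g).toMonoidHom SUsub : Set U2)) ∧
      K = Subgroup.map (MulAut.conj g).toMonoidHom SUsub ⊔ centralCyclic (2 * s) := by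
  have hSU := SU_le K hmap
  obtain ⟨s, hs, hdet⟩ := exists_det_pow K hK hSU hne
  have hconj : Subgroup.map (MulAut.conj (1 : U2)).toMonoidHom SUsub = SUsub := by
    ext x
    simp [Subgroup.mem_map]
  refine ⟨1, s, hs, ?_, ?_⟩
  · rw [hconj]
    ext g
    constructor
    · rintro ⟨k, hk, rfl⟩
      exact component_subset_SU K s hs hdet k hk
    · exact SU_subset_component K hSU g
  · rw [hconj]
    apply le_antisymm
    · intro k hk
      -- `z = diag (exp (i t / 2), exp (i t / 2))` is a central square root of `det k = exp (i t)`.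
      obtain ⟨t, ht⟩ := exists_det (k : U2)
      have hzz : Complex.exp ((t / 2 : ℝ) * Complex.I) ^ 2 = Complex.exp (t * Complex.I) := by
        rw [← Complex.exp_nat_mul]
        congr 1
        push_cast
        ring
      have hz : dg (t / 2) (t / 2) ∈ centralCyclic (2 * s) := by
        refine ⟨dg_center _, ?_⟩
        apply Subtype.ext
        have hp : Complex.exp ((t / 2 : ℝ) * Complex.I) ^ (2 * s) = 1 := by
          rw [pow_mul, hzz, ← ht]
          exact (hdet k).1 hk
        rw [SubmonoidClass.coe_pow, dg_val, Matrix.diagonal_pow]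
        ext i j
        fin_cases i <;> fin_cases j <;> simp at hp ⊢ <;> exact hp
      have hk' : k * (dg (t / 2) (t / 2))⁻¹ ∈ SUsub := by
        rw [mem_SUsub, det_mul_U2, dg_inv, det_dg, ht, ← Complex.exp_add, ← Complex.exp_add,
          ← Complex.exp_zero]
        congr 1
        push_cast
        ring
      have := Subgroup.mul_mem_sup hk' hz
      simpa using this
    · refine sup_le hSU ?_
      rintro z ⟨hz, hzs⟩
      obtain ⟨h1, h2⟩ := center_scalar z hz
      rw [hdet, h1, ← pow_mul]
      have h3 := congrArg Subtype.val hzs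
      rw [SubmonoidClass.coe_pow, h2, Matrix.diagonal_pow] at h3
      simpa using congrFun (congrFun h3 0) 0
end

section
/- For each of the finite groups H ∈ {A₅, S₄, A₄, D₄}, the second cohomology group H²(H; ℤ/2) with trivial coefficients is nonzero, and the number of conjugacy classes (under the extension group) of full subgroups K of the central extension H̃ ×_{C₂} S¹ meeting the central circle in a fixed C_{2s} equals |H^{ab}|: specifically this count is 1, 2, 3, 4 for H = A₅, S₄, A₄, D₄ respectively. -/
/-!
**Cohomology.** For `S₄` and `C₂ × C₂` the cup square of a homomorphism to `ℤ/2` that is nonzero on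
an involution is nontrivial. For `A₄ = 𝔽₄ ⋊ 𝔽₄ˣ` a cocycle of the binary tetrahedral extension is
given by an invariant bilinear form on `𝔽₄` (`kleinCochain`), and for `A₅` the corestriction of this
cocycle along `A₄ ≤ A₅` (`cor`) works because the index is odd. In every case the class is
detected on a subgroup of order two (`nontrivial_H2`).

**Counting.** The character `det^s` of `U(2)` is `c ↦ c^(2s)` on scalars, with kernel `C_{2s}` there.
Hence a full subgroup `K` of `p⁻¹(H)` meeting the circle in `C_{2s}` is
`{g ∈ p⁻¹(H) | det(g)^s = χ(p(g))}` for a unique character `χ` of `H`, and every character of the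
finite group `H` occurs since the circle is divisible. These subgroups are normal in `p⁻¹(H)`, so
each conjugacy class is a single subgroup (`fullCount_eq`), and the number of characters is `|H^{ab}|`.
-/


open Matrix

/-- The collection of full subgroups of `p⁻¹(H) = H̃ ×_{C₂} S¹ ≤ U(2)`
(subgroups mapping onto `H ≤ PU(2) ≅ SO(3)`) which meet the central circle
exactly in the cyclic group `C_n`. -/
def FullAt (H : Subgroup PU2) (n : ℕ) : Set (Subgroup U2) :=
  {K | Subgroup.map pQ K = H ∧ K ⊓ Subgroup.center U2 = centralCyclic n}

/-- The number of conjugacy classes, under conjugation by elements of the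
extension group `p⁻¹(H)`, of full subgroups of `p⁻¹(H)` meeting the central
circle exactly in `C_n`. -/
noncomputable def fullCount (H : Subgroup PU2) (n : ℕ) : ℕ :=
  Nat.card (Quot (fun (K K' : FullAt H n) =>
    ∃ g ∈ Subgroup.comap pQ H, Subgroup.map (MulAut.conj g).toMonoidHom K.1 = K'.1))

/-! ### Second cohomology with `ℤ/2` coefficients -/

open groupCohomology in
/-- A `2`-coboundary `c` with trivial `ℤ/2` coefficients satisfies `c(u, u) + c(1, 1) = 2 φ(u) = 0` for
every involution `u`; this detects that a cocycle stays nontrivial on `⟨u⟩`. -/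
theorem nontrivial_H2 {G : Type} [Group G] (c : G → G → ZMod 2)
    (hc : ∀ a b d, c (a * b) d + c a b = c b d + c a (b * d))
    (u : G) (hu : u * u = 1) (hne : c u u + c 1 1 ≠ 0) :
    Nontrivial (groupCohomology (Rep.trivial (ZMod 2) G (ZMod 2)) 2) := by
  have hmem : (fun p : G × G => c p.1 p.2) ∈ cocycles₂ (Rep.trivial (ZMod 2) G (ZMod 2)) := by
    rw [mem_cocycles₂_iff]
    intro a b d
    simpa using hc a b d
  refine ⟨⟨H2π (Rep.trivial (ZMod 2) G (ZMod 2)) ⟨_, hmem⟩, 0, ?_⟩⟩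
  intro h
  rw [H2π_eq_zero_iff] at h
  obtain ⟨φ, hφ⟩ := h
  apply hne
  have h1 : φ u - φ (u * u) + φ u = c u u := congrFun hφ (u, u)
  have h2 : φ 1 - φ (1 * 1) + φ 1 = c 1 1 := congrFun hφ (1, 1)
  rw [← h1, ← h2, hu, one_mul]
  have h3 : φ u + φ u = 0 := CharTwo.add_self_eq_zero (R := ZMod 2) _
  linear_combination h3

/-- An `A₄`-invariant `2`-cochain on the four-point set, written for `p = g₁ · 0`, `q = g₁ g₂ · 0`
with `0` as the omitted first argument. Identifying the points `0, 1, 2, 3` with `0, 1, ω, ω²` in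
`𝔽₄`, the entry at `(p, q)` is `λ(p · (q - p)²)`, where `λ : 𝔽₄ → 𝔽₂` is linear with `λ(1) = 1`
and `λ(ω) = 0`. The form `(v, w) ↦ λ(v w²)` on the Klein four group is invariant under `C₃ = 𝔽₄ˣ` and
equals `1` on the diagonal away from `0`, so the class restricts to that of the quaternion group.
The table is extended by zero to the point `4`, which is the one fixed by `A₄ ≤ A₅`. -/
def kleinCochain (p q : Fin 5) : ZMod 2 :=
  !![0, 0, 0, 0, 0; 1, 0, 0, 1, 0; 1, 1, 0, 0, 0; 1, 0, 1, 0, 0; 0, 0, 0, 0, 0] p q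

/-- The cocycle identity, for `a` in the stabilizer `A₄` of the point `4` in `A₅`. -/
theorem kleinCochain_cocycle : ∀ a : Equiv.Perm (Fin 5), a 4 = 4 → Equiv.Perm.sign a = 1 →
    ∀ p q : Fin 5, p ≠ 4 → q ≠ 4 →
    kleinCochain (a p) (a q) + kleinCochain (a 0) (a p) =
      kleinCochain p q + kleinCochain (a 0) (a q) := by
  decide +kernel

theorem kleinCochain_cocycle_four : ∀ a : Equiv.Perm (Fin 4), Equiv.Perm.sign a = 1 →
    ∀ p q : Fin 4,
    kleinCochain (a p).castSucc (a q).castSucc + kleinCochain (a 0).castSucc (a p).castSucc =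
      kleinCochain p.castSucc q.castSucc + kleinCochain (a 0).castSucc (a q).castSucc := by
  decide +kernel

/-- Even permutations moving `4` to `x`: a transversal of the point stabilizer `A₄` in `A₅`. -/
def transversal : Fin 5 → Equiv.Perm (Fin 5) :=
  ![Equiv.swap 4 0 * Equiv.swap 1 2, Equiv.swap 4 1 * Equiv.swap 0 2, Equiv.swap 4 2 * Equiv.swap 0 1,
    Equiv.swap 4 3 * Equiv.swap 0 1, 1]

theorem transversal_sign : ∀ x, Equiv.Perm.sign (transversal x) = 1 := by decide +kernel
theorem transversal_apply : ∀ x, transversal x 4 = x := by decide +kernel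

/-- The element `t_{g x}⁻¹ g t_x` of the stabilizer of `4` determined by `g` and the coset of `x`. -/
def stabPart (g : Equiv.Perm (Fin 5)) (x : Fin 5) : Equiv.Perm (Fin 5) :=
  (transversal (g x))⁻¹ * g * transversal x

theorem stabPart_mul (a b : Equiv.Perm (Fin 5)) (x : Fin 5) :
    stabPart (a * b) x = stabPart a (b x) * stabPart b x := by
  simp [stabPart, mul_assoc]

theorem stabPart_fix (a : Equiv.Perm (Fin 5)) (x : Fin 5) : stabPart a x 4 = 4 := by
  simp only [stabPart, Equiv.Perm.mul_apply, transversal_apply, Equiv.Perm.inv_eq_iff_eq]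

theorem stabPart_sign (a : Equiv.Perm (Fin 5)) (ha : Equiv.Perm.sign a = 1) (x : Fin 5) :
    Equiv.Perm.sign (stabPart a x) = 1 := by
  simp [stabPart, transversal_sign, ha]

/-- The corestriction from `A₄` to `A₅` of the cocycle `(g₁, g₂) ↦ kleinCochain (g₁ 0) (g₁ g₂ 0)`. -/
def cor (a b : Equiv.Perm (Fin 5)) : ZMod 2 :=
  ∑ x, kleinCochain (stabPart a (b x) 0) (stabPart (a * b) x 0)

theorem cor_cocycle (a b d : Equiv.Perm (Fin 5)) (ha : Equiv.Perm.sign a = 1) :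
    cor (a * b) d + cor a b = cor b d + cor a (b * d) := by
  have h : cor a b = ∑ x, kleinCochain (stabPart a (b (d x)) 0) (stabPart (a * b) (d x) 0) :=
    (Equiv.sum_comp d (fun x => kleinCochain (stabPart a (b x) 0) (stabPart (a * b) x 0))).symm
  rw [h]
  -- With the sum for `cor a b` reindexed by `d`, the identity holds term by term.
  simp only [cor, ← Finset.sum_add_distrib]
  refine Finset.sum_congr rfl fun x _ => ?_
  have h4 (g : Equiv.Perm (Fin 5)) (y) : stabPart g y 0 ≠ 4 := by
    intro h
    have := (stabPart g y).injective (h.trans (stabPart_fix g y).symm)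
    exact absurd this (by decide)
  have := kleinCochain_cocycle (stabPart a (b (d x))) (stabPart_fix _ _) (stabPart_sign _ ha _)
    (stabPart b (d x) 0) (stabPart (b * d) x 0) (h4 _ _) (h4 _ _)
  simpa only [stabPart_mul, mul_assoc, Equiv.Perm.mul_apply] using this

theorem H2_A5 : Nontrivial (groupCohomology
    (Rep.trivial (ZMod 2) (alternatingGroup (Fin 5)) (ZMod 2)) 2) := by
  exact nontrivial_H2 (fun a b => cor a b) (fun a b d => cor_cocycle a b d a.2)
    ⟨Equiv.swap 0 1 * Equiv.swap 2 3, Equiv.Perm.mem_alternatingGroup.mpr (by decide +kernel)⟩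
    (by decide +kernel) (by decide +kernel)

theorem H2_A4 : Nontrivial (groupCohomology
    (Rep.trivial (ZMod 2) (alternatingGroup (Fin 4)) (ZMod 2)) 2) := by
  exact nontrivial_H2 (fun a b => kleinCochain (a.1 0).castSucc (a.1 (b.1 0)).castSucc)
    (fun a b d => kleinCochain_cocycle_four a a.2 (b.1 0) (b.1 (d.1 0)))
    ⟨Equiv.swap 0 1 * Equiv.swap 2 3, Equiv.Perm.mem_alternatingGroup.mpr (by decide +kernel)⟩
    (by decide +kernel) (by decide +kernel)

/-- The cup square `χ ∪ χ` is nontrivial as soon as `χ` is nonzero on some involution. -/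
theorem nontrivial_H2_of_hom {G : Type} [Group G] (χ : G →* Multiplicative (ZMod 2))
    (u : G) (hu : u * u = 1) (hne : χ u ≠ 1) :
    Nontrivial (groupCohomology (Rep.trivial (ZMod 2) G (ZMod 2)) 2) := by
  refine nontrivial_H2 (fun a b => (χ a).toAdd * (χ b).toAdd) (fun a b d => ?_) u hu ?_
  · simp only [map_mul, toAdd_mul]
    ring
  · revert hne
    simp only [map_one, toAdd_one]
    generalize χ u = v
    revert v
    decide

theorem H2_V4 : Nontrivial (groupCohomology
        (Rep.trivial (ZMod 2) (Multiplicative (ZMod 2) × Multiplicative (ZMod 2))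
          (ZMod 2)) 2) :=
  nontrivial_H2_of_hom (MonoidHom.fst _ _) (.ofAdd 1, 1) (by decide) (by decide)

theorem H2_S4 : Nontrivial (groupCohomology
        (Rep.trivial (ZMod 2) (Equiv.Perm (Fin 4)) (ZMod 2)) 2) := by
  let σ : ℤˣ →* Multiplicative (ZMod 2) :=
    { toFun := fun e => if e = 1 then 1 else .ofAdd 1, map_one' := by decide, map_mul' := by decide }
  exact nontrivial_H2_of_hom (σ.comp Equiv.Perm.sign) (Equiv.swap 0 1) (by decide) (by decide)

/-! ### Full subgroups and characters -/

/-- The character `g ↦ det(g)^s` of `U(2)`, with values in `ℂˣ`. -/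
def detPow (s : ℕ) : U2 →* ℂˣ :=
  (powMonoidHom s).comp
    (Matrix.detMonoidHom.comp (Matrix.unitaryGroup (Fin 2) ℂ).subtype).toHomUnits

theorem detPow_val (s : ℕ) (g : U2) : (detPow s g : ℂ) = g.1.det ^ s := rfl

theorem norm_detPow (s : ℕ) (g : U2) : ‖(detPow s g : ℂ)‖ = 1 := by
  rw [detPow_val, norm_pow, CStarRing.norm_of_mem_unitary (Matrix.det_of_mem_unitary g.2), one_pow]

/-- A central element commutes with `diag(1, -1)` and with the swap matrix, so it is scalar. -/
theorem eq_smul_one_of_mem_center {z : U2} (hz : z ∈ Subgroup.center U2) :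
    ∃ c : ℂ, z.1 = c • (1 : Matrix (Fin 2) (Fin 2) ℂ) := by
  rw [Subgroup.mem_center_iff] at hz
  have h1 := congrArg Subtype.val (hz ⟨!![1, 0; 0, -1], by
    rw [Matrix.mem_unitaryGroup_iff]; ext i j; fin_cases i <;> fin_cases j <;>
      simp [Matrix.mul_apply, Fin.sum_univ_two, Matrix.star_apply]⟩)
  have h2 := congrArg Subtype.val (hz ⟨!![0, 1; 1, 0], by
    rw [Matrix.mem_unitaryGroup_iff]; ext i j; fin_cases i <;> fin_cases j <;>
      simp [Matrix.mul_apply, Fin.sum_univ_two, Matrix.star_apply]⟩)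
  refine ⟨z.1 0 0, ?_⟩
  have a := congrFun (congrFun h1 0) 1
  have b := congrFun (congrFun h1 1) 0
  have c := congrFun (congrFun h2 0) 1
  simp [Matrix.mul_apply, Fin.sum_univ_two] at a b c
  ext i j
  fin_cases i <;> fin_cases j <;> simp
  · linear_combination (1 / 2 : ℂ) * a
  · linear_combination (-1 / 2 : ℂ) * b
  · exact c

theorem mem_centralCyclic_iff {z : U2} (hz : z ∈ Subgroup.center U2) (s : ℕ) :
    z ∈ centralCyclic (2 * s) ↔ detPow s z = 1 := by
  obtain ⟨c, hc⟩ := eq_smul_one_of_mem_center hz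
  have h : z ∈ centralCyclic (2 * s) ↔ z ^ (2 * s) = 1 :=
    ⟨fun h => h.2, fun h => ⟨hz, h⟩⟩
  have hd : (detPow s z : ℂ) = c ^ (2 * s) := by
    rw [detPow_val, hc, Matrix.det_smul, Matrix.det_one, Fintype.card_fin, mul_one, pow_mul]
  have hp : (z ^ (2 * s)).1 = c ^ (2 * s) • (1 : Matrix (Fin 2) (Fin 2) ℂ) := by
    rw [SubmonoidClass.coe_pow, hc, smul_pow, one_pow]
  rw [h, Units.ext_iff, hd, Subtype.ext_iff, hp]
  constructor
  · intro h
    simpa using congrFun (congrFun h 0) 0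
  · intro h
    simp [h]

/-- On scalars `detPow s` is `c ↦ c^(2s)`, which maps the unit circle onto itself. -/
theorem exists_center_detPow {s : ℕ} (hs : 1 ≤ s) (w : ℂˣ) (hw : ‖(w : ℂ)‖ = 1) :
    ∃ z ∈ Subgroup.center U2, detPow s z = w := by
  obtain ⟨c, hc⟩ := IsAlgClosed.exists_pow_nat_eq (w : ℂ) (n := 2 * s) (by omega)
  have hn : ‖c‖ = 1 := by
    refine (pow_eq_one_iff_of_nonneg (norm_nonneg c) (n := 2 * s) (by omega)).mp ?_
    rw [← norm_pow, hc, hw]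
  have hcc : c * star c = 1 := by
    rw [Complex.star_def, Complex.mul_conj, Complex.normSq_eq_norm_sq, hn]; simp
  refine ⟨⟨c • 1, ?_⟩, ?_, ?_⟩
  · rw [Matrix.mem_unitaryGroup_iff, star_smul, star_one, smul_mul_smul_comm, hcc, one_mul, one_smul]
  · rw [Subgroup.mem_center_iff]
    intro g
    ext1
    simp
  · ext
    rw [detPow_val, ← hc]
    simp [pow_mul]

theorem pQ_eq_iff {g g' : U2} : pQ g = pQ g' ↔ g⁻¹ * g' ∈ Subgroup.center U2 :=
  QuotientGroup.eq

theorem pQ_of_mem_center {z : U2} (hz : z ∈ Subgroup.center U2) : pQ z = 1 :=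
  (QuotientGroup.eq_one_iff z).mpr hz

/-- The subgroup `{g ∈ p⁻¹(H) | det(g)^s = χ(p(g))}` attached to a character `χ` of `H`. -/
def graphSubgroup (H : Subgroup PU2) (s : ℕ) (χ : H →* ℂˣ) : Subgroup U2 where
  carrier := {g | ∃ h : pQ g ∈ H, detPow s g = χ ⟨pQ g, h⟩}
  one_mem' := ⟨by simp [H.one_mem], by
    rw [map_one]; exact (map_one χ).symm⟩
  mul_mem' := by
    rintro a b ⟨ha, ha'⟩ ⟨hb, hb'⟩
    exact ⟨by rw [map_mul]; exact H.mul_mem ha hb, by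
      rw [map_mul, ha', hb', ← map_mul]; rfl⟩
  inv_mem' := by
    rintro a ⟨ha, ha'⟩
    exact ⟨by rw [map_inv]; exact H.inv_mem ha, by
      rw [map_inv, ha', ← map_inv]; rfl⟩

theorem exists_mem_graphSubgroup (H : Subgroup PU2) [Finite H] {s : ℕ} (hs : 1 ≤ s) (χ : H →* ℂˣ)
    (h : H) :
    ∃ g ∈ graphSubgroup H s χ, pQ g = h := by
  obtain ⟨g, hg⟩ := QuotientGroup.mk'_surjective (Subgroup.center U2) h.1
  change pQ g = h at hg
  have hχ : ‖(χ h : ℂ)‖ = 1 := by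
    exact ((Units.coeHom ℂ).isOfFinOrder (χ.isOfFinOrder (isOfFinOrder_of_finite h))).norm_eq_one
  obtain ⟨z, hz, hzw⟩ := exists_center_detPow hs ((detPow s g)⁻¹ * χ h) (by
    rw [Units.val_mul, Units.val_inv_eq_inv_val, norm_mul, norm_inv, norm_detPow, hχ]; simp)
  have hgz : pQ (g * z) = h := by rw [map_mul, pQ_of_mem_center hz, mul_one, hg]
  refine ⟨g * z, ⟨hgz ▸ h.2, ?_⟩, hgz⟩
  rw [map_mul, hzw, mul_inv_cancel_left]
  congr 1
  exact Subtype.ext hgz.symm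

theorem graphSubgroup_mem_FullAt (H : Subgroup PU2) [Finite H] {s : ℕ} (hs : 1 ≤ s) (χ : H →* ℂˣ) :
    graphSubgroup H s χ ∈ FullAt H (2 * s) := by
  constructor
  · ext h
    constructor
    · rintro ⟨g, ⟨hg, -⟩, rfl⟩
      exact hg
    · intro hh
      obtain ⟨g, hg, hgh⟩ := exists_mem_graphSubgroup H hs χ ⟨h, hh⟩
      exact ⟨g, hg, hgh⟩
  · ext z
    rw [Subgroup.mem_inf]
    have key (hz : z ∈ Subgroup.center U2) :
        z ∈ graphSubgroup H s χ ↔ detPow s z = 1 := by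
      have h1 : pQ z = 1 := pQ_of_mem_center hz
      have h2 : pQ z ∈ H := h1 ▸ H.one_mem
      have h3 : (⟨pQ z, h2⟩ : H) = 1 := Subtype.ext h1
      refine ⟨fun ⟨h, e⟩ => ?_, fun e => ⟨h2, ?_⟩⟩
      · rw [e, h3, map_one]
      · rw [e, h3, map_one]
    constructor
    · rintro ⟨h1, hz⟩
      exact (mem_centralCyclic_iff hz s).mpr ((key hz).mp h1)
    · intro h
      exact ⟨(key h.1).mpr ((mem_centralCyclic_iff h.1 s).mp h), h.1⟩

/-- On a full subgroup meeting the circle in `C_{2s}`, the value `det^s` only depends on the image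
in `PU(2)`, because `C_{2s}` is the kernel of `det^s` on the centre. -/
theorem detPow_eq_of_mem_FullAt {H : Subgroup PU2} {s : ℕ} {K : Subgroup U2}
    (hK : K ∈ FullAt H (2 * s)) {g g' : U2} (hg : g ∈ K) (hg' : g' ∈ K) (h : pQ g = pQ g') :
    detPow s g = detPow s g' := by
  have hz := pQ_eq_iff.mp h
  have : g⁻¹ * g' ∈ centralCyclic (2 * s) :=
    hK.2 ▸ Subgroup.mem_inf.mpr ⟨K.mul_mem (K.inv_mem hg) hg', hz⟩
  rw [mem_centralCyclic_iff hz, map_mul, map_inv, inv_mul_eq_one] at this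
  exact this

theorem exists_graphSubgroup_eq {H : Subgroup PU2} {s : ℕ} {K : Subgroup U2}
    (hK : K ∈ FullAt H (2 * s)) : ∃ χ : H →* ℂˣ, graphSubgroup H s χ = K := by
  have hlift (h : H) : ∃ g ∈ K, pQ g = h := hK.1.ge h.2
  choose l hlK hl using hlift
  let χ : H →* ℂˣ := MonoidHom.mk' (fun h => detPow s (l h)) fun a b => by
    rw [← map_mul]
    refine detPow_eq_of_mem_FullAt hK (hlK _) (K.mul_mem (hlK _) (hlK _)) ?_
    rw [map_mul, hl, hl, hl]
    rfl
  refine ⟨χ, ?_⟩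
  ext g
  constructor
  · rintro ⟨hg, e⟩
    have hz : (l ⟨pQ g, hg⟩)⁻¹ * g ∈ Subgroup.center U2 := pQ_eq_iff.mp (hl _)
    have hzK : (l ⟨pQ g, hg⟩)⁻¹ * g ∈ K ⊓ Subgroup.center U2 := by
      rw [hK.2, mem_centralCyclic_iff hz, map_mul, map_inv, e]
      exact inv_mul_cancel _
    simpa using K.mul_mem (hlK ⟨pQ g, hg⟩) hzK.1
  · intro hg
    have hp : pQ g ∈ H := hK.1 ▸ Subgroup.mem_map_of_mem pQ hg
    exact ⟨hp, detPow_eq_of_mem_FullAt hK hg (hlK _) (hl ⟨pQ g, hp⟩).symm⟩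

/-- Both `det^s` and `χ ∘ p` are class functions on `p⁻¹(H)`, so conjugate subgroups of this form
have the same character. -/
theorem graphSubgroup_conj (H : Subgroup PU2) [Finite H] {s : ℕ} (hs : 1 ≤ s) {χ χ' : H →* ℂˣ}
    {g : U2} (hg : pQ g ∈ H)
    (h : (graphSubgroup H s χ).map (MulAut.conj g).toMonoidHom = graphSubgroup H s χ') :
    χ = χ' := by
  ext1 x
  obtain ⟨k, ⟨hk, e⟩, hkx⟩ := exists_mem_graphSubgroup H hs χ x
  have hmem : g * k * g⁻¹ ∈ graphSubgroup H s χ' :=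
    h ▸ Subgroup.mem_map_of_mem (MulAut.conj g).toMonoidHom (show k ∈ graphSubgroup H s χ from ⟨hk, e⟩)
  obtain ⟨hc, e'⟩ := hmem
  have hx : (⟨pQ k, hk⟩ : H) = x := Subtype.ext hkx
  have hy : (⟨pQ (g * k * g⁻¹), hc⟩ : H) = ⟨pQ g, hg⟩ * x * ⟨pQ g, hg⟩⁻¹ :=
    Subtype.ext (by
      change pQ (g * k * g⁻¹) = pQ g * x.1 * (pQ g)⁻¹
      rw [map_mul, map_mul, map_inv, hkx])
  rw [hx] at e
  rw [hy, map_mul, map_mul, map_inv, mul_inv_cancel_comm, map_mul, map_mul, map_inv,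
    mul_inv_cancel_comm, e] at e'
  exact e'

theorem fullCount_eq (H : Subgroup PU2) [Finite H] {s : ℕ} (hs : 1 ≤ s) :
    fullCount H (2 * s) = Nat.card (H →* ℂˣ) := by
  symm
  refine Nat.card_congr (Equiv.ofBijective
    (fun χ => Quot.mk _ ⟨graphSubgroup H s χ, graphSubgroup_mem_FullAt H hs χ⟩) ⟨?_, ?_⟩)
  · intro χ χ' h
    -- The relation on `FullAt` is contained in equality, so the subgroup descends to the quotient.
    have hinj : graphSubgroup H s χ = graphSubgroup H s χ' := by
      refine congrArg (Quot.lift (fun K : FullAt H (2 * s) => K.1) ?_) h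
      rintro ⟨K, hK⟩ ⟨K', hK'⟩ ⟨g, hg, e⟩
      obtain ⟨ψ, rfl⟩ := exists_graphSubgroup_eq hK
      obtain ⟨ψ', rfl⟩ := exists_graphSubgroup_eq hK'
      exact congrArg (graphSubgroup H s) (graphSubgroup_conj H hs hg e)
    refine graphSubgroup_conj H hs (g := 1) (by simp [H.one_mem]) ?_
    rw [← hinj, map_one]
    exact Subgroup.map_id _
  · rintro ⟨K, hK⟩
    obtain ⟨χ, rfl⟩ := exists_graphSubgroup_eq hK
    exact ⟨χ, rfl⟩

/-! ### Abelianizations -/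

/-- Characters factor through the abelianization, a finite abelian group isomorphic to its dual. -/
theorem card_hom {G : Type} [Group G] [Finite G] :
    Nat.card (G →* ℂˣ) = (commutator G).index := by
  rw [Nat.card_congr (Abelianization.lift (G := G) (A := ℂˣ)),
    CommGroup.card_monoidHom_of_hasEnoughRootsOfUnity]
  rfl

theorem index_commutator_A5 : (commutator (alternatingGroup (Fin 5))).index = 1 := by
  rw [commutator_alternatingGroup_eq_top (by simp), Subgroup.index_top]

theorem index_commutator_A4 : (commutator (alternatingGroup (Fin 4))).index = 3 := by
  rw [← alternatingGroup.kleinFour_eq_commutator (by simp)]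
  have h := (alternatingGroup.kleinFour (Fin 4)).card_mul_index
  rw [alternatingGroup.kleinFour_card_of_card_eq_four (by simp),
    alternatingGroup.card_of_card_eq_four (by simp)] at h
  omega

theorem index_commutator_S4 : (commutator (Equiv.Perm (Fin 4))).index = 2 := by
  have : commutator (Equiv.Perm (Fin 4)) = alternatingGroup (Fin 4) := by
    refine le_antisymm alternatingGroup.commutator_perm_le fun σ hσ => ?_
    have h : ∀ σ : Equiv.Perm (Fin 4), Equiv.Perm.sign σ = 1 →
        ∃ a b : Equiv.Perm (Fin 4), a * b * a⁻¹ * b⁻¹ = σ := by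
      decide +kernel
    obtain ⟨a, b, rfl⟩ := h σ hσ
    exact Subgroup.commutator_mem_commutator (Subgroup.mem_top a) (Subgroup.mem_top b)
  rw [this, alternatingGroup.index_eq_two]

theorem index_commutator_V4 :
    (commutator (Multiplicative (ZMod 2) × Multiplicative (ZMod 2))).index = 4 := by
  rw [(commutator_eq_bot_iff_center_eq_top _).mpr CommGroup.center_eq_top, Subgroup.index_bot]
  simp

/-- The count only depends on the isomorphism type of `H`. -/
theorem fullCount_eq_index {G : Type} [Group G] [Finite G] {H : Subgroup PU2} (e : H ≃* G) {s : ℕ}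
    (hs : 1 ≤ s) : fullCount H (2 * s) = (commutator G).index := by
  have : Finite H := Finite.of_equiv G e.symm.toEquiv
  rw [fullCount_eq H hs, Nat.card_congr e.monoidHomCongrLeftEquiv, card_hom]

/-- for each `H` in `{A₅, S₄, A₄, D₄ ≅ C₂ × C₂}` the cohomology
group `H²(H; ℤ/2)` (trivial coefficients) is nonzero, and the number of
conjugacy classes of full subgroups of `H̃ ×_{C₂} S¹` meeting the central
circle in `C_{2s}` equals `|H^{ab}|`, namely `1, 2, 3, 4` respectively. -/
theorem cohomology_and_full_subgroup_count :
    (Nontrivial (groupCohomology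
        (Rep.trivial (ZMod 2) (alternatingGroup (Fin 5)) (ZMod 2)) 2) ∧
      Nontrivial (groupCohomology
        (Rep.trivial (ZMod 2) (Equiv.Perm (Fin 4)) (ZMod 2)) 2) ∧
      Nontrivial (groupCohomology
        (Rep.trivial (ZMod 2) (alternatingGroup (Fin 4)) (ZMod 2)) 2) ∧
      Nontrivial (groupCohomology
        (Rep.trivial (ZMod 2) (Multiplicative (ZMod 2) × Multiplicative (ZMod 2))
          (ZMod 2)) 2)) ∧
    (∀ (H : Subgroup PU2) (s : ℕ), 1 ≤ s →
      (Nonempty (↥H ≃* alternatingGroup (Fin 5)) → fullCount H (2 * s) = 1) ∧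
      (Nonempty (↥H ≃* Equiv.Perm (Fin 4)) → fullCount H (2 * s) = 2) ∧
      (Nonempty (↥H ≃* alternatingGroup (Fin 4)) → fullCount H (2 * s) = 3) ∧
      (Nonempty (↥H ≃* Multiplicative (ZMod 2) × Multiplicative (ZMod 2)) →
        fullCount H (2 * s) = 4)) := by
  refine ⟨⟨H2_A5, H2_S4, H2_A4, H2_V4⟩, fun H s hs => ⟨?_, ?_, ?_, ?_⟩⟩ <;> rintro ⟨e⟩ <;>
    rw [fullCount_eq_index e hs]
  · exact index_commutator_A5
  · exact index_commutator_S4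
  · exact index_commutator_A4
  · exact index_commutator_V4
end
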